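/- Let E₁ and E₂ be Polish spaces, let Q(de₂|e₁) be a Borel measurable Markov kernel from E₁ to E₂, and let g : E₁ × E₂ → [0,∞) be a bounded lower semi-analytic function. Then the function f(e₁) = ∫ g(e₁,e₂) Q(de₂|e₁) is lower semi-analytic on E₁. -/

import Mathlib

open MeasureTheory ProbabilityTheory

namespace LSA

open Set Filter Topology

/-- closed hull of the image of a bounded cylinder -/
def hull {X : Type*} [TopologicalSpace X] (F : (ℕ → ℕ) → X) (k : ℕ) (s : Fin k → ℕ) : Set X :=
  closure (F '' {x | ∀ i : Fin k, x i ≤ s i})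

def core {X : Type*} [TopologicalSpace X] (F : (ℕ → ℕ) → X) (n : ℕ → ℕ) : Set X :=
  ⋂ k, hull F k (fun i => n i)

theorem core_subset {X : Type*} [TopologicalSpace X] [FirstCountableTopology X] [T2Space X]
    (F : (ℕ → ℕ) → X) (hF : Continuous F) (n : ℕ → ℕ) : core F n ⊆ range F := by
  intro y hy
  obtain ⟨U, hU⟩ := (𝓝 y).exists_antitone_basis
  have h1 : ∀ k, ∃ x : ℕ → ℕ, (∀ i : Fin k, x i ≤ n i) ∧ F x ∈ U k := by
    intro k
    have hk := mem_iInter.1 hy k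
    rw [hull, mem_closure_iff_nhds] at hk
    obtain ⟨z, hz1, x, hx, rfl⟩ := hk (U k) (hU.1.mem_of_mem trivial)
    exact ⟨x, hx, hz1⟩
  choose x hx hxU using h1
  have hlim : Tendsto (fun k => F (x k)) atTop (𝓝 y) := hU.tendsto hxU
  have hK : IsCompact (Set.pi univ (fun i => Iic (n i))) :=
    isCompact_univ_pi fun i => (finite_Iic (n i)).isCompact
  obtain ⟨z, -, φ, hφ, hz⟩ := hK.tendsto_subseq (x := fun k i => min (x k i) (n i))
    (fun k i _ => mem_Iic.2 (min_le_right (x k i) (n i)))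
  refine ⟨z, ?_⟩
  have hz' : Tendsto (x ∘ φ) atTop (𝓝 z) := by
    rw [tendsto_pi_nhds] at hz ⊢
    intro i
    refine (hz i).congr' ?_
    filter_upwards [eventually_gt_atTop i] with k hk
    have : i < φ k := lt_of_lt_of_le hk hφ.le_apply
    exact min_eq_left (hx (φ k) ⟨i, this⟩)
  exact tendsto_nhds_unique ((hF.tendsto z).comp hz') (hlim.comp hφ.tendsto_atTop)

theorem exists_core {X : Type*} [TopologicalSpace X] [MeasurableSpace X] [OpensMeasurableSpace X]
    (F : (ℕ → ℕ) → X) (μ : Measure X) [IsFiniteMeasure μ] (r : ENNReal)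
    (hr : r < μ (range F)) : ∃ n, r < μ (core F n) := by
  obtain ⟨r', hr1, hr2⟩ := exists_between hr
  -- one step
  have step : ∀ (k : ℕ) (S : Set (ℕ → ℕ)), r' < μ (F '' S) →
      ∃ m, r' < μ (F '' (S ∩ {x | x k ≤ m})) := by
    intro k S hS
    have hmono : Monotone fun m : ℕ => F '' (S ∩ {x | x k ≤ m}) := by
      intro a b hab
      exact image_mono (inter_subset_inter_right _ fun x hx => le_trans hx hab)
    have hU : (⋃ m : ℕ, F '' (S ∩ {x | x k ≤ m})) = F '' S := by
      rw [← image_iUnion, ← inter_iUnion]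
      congr 1
      refine inter_eq_left.2 fun x _ => mem_iUnion.2 ⟨x k, le_refl (x k)⟩
    rw [← hU, hmono.measure_iUnion] at hS
    exact lt_iSup_iff.1 hS
  let T := {S : Set (ℕ → ℕ) // r' < μ (F '' S)}
  let next : ℕ → T → T := fun k S => ⟨_, (step k S.1 S.2).choose_spec⟩
  let S0 : T := ⟨univ, by rwa [image_univ]⟩
  let seq : ℕ → T := fun k => Nat.rec S0 (fun k S => next k S) k
  let n : ℕ → ℕ := fun k => (step k (seq k).1 (seq k).2).choose
  have hseq : ∀ k, (seq (k+1)).1 = (seq k).1 ∩ {x | x k ≤ n k} := fun k => rfl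
  have hsub : ∀ k, (seq k).1 ⊆ {x | ∀ i : Fin k, x i ≤ n i} := by
    intro k
    induction k with
    | zero => intro x _ i; exact i.elim0
    | succ k ih =>
      rw [hseq]
      rintro x ⟨h1, h2⟩ i
      rcases Nat.lt_succ_iff_lt_or_eq.1 i.2 with h | h
      · exact ih h1 ⟨i, h⟩
      · rw [h]; exact h2
  refine ⟨n, lt_of_lt_of_le hr1 ?_⟩
  have hanti : Antitone fun k => hull F k (fun i => n i) := by
    intro a b hab
    exact closure_mono (image_mono fun x hx i => hx ⟨i, lt_of_lt_of_le i.2 hab⟩)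
  rw [core, hanti.measure_iInter (fun k => isClosed_closure.measurableSet.nullMeasurableSet)
    ⟨0, measure_ne_top _ _⟩]
  refine le_iInf fun k => (seq k).2.le.trans (measure_mono ?_)
  exact (image_mono (hsub k)).trans subset_closure

theorem measurableSet_core {X : Type*} [TopologicalSpace X] [MeasurableSpace X]
    [OpensMeasurableSpace X] (F : (ℕ → ℕ) → X) (n : ℕ → ℕ) : MeasurableSet (core F n) :=
  MeasurableSet.iInter fun _ => isClosed_closure.measurableSet

theorem nullMeasurable {X : Type*} [TopologicalSpace X] [FirstCountableTopology X] [T2Space X]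
    [MeasurableSpace X] [OpensMeasurableSpace X] (μ : Measure X) [IsFiniteMeasure μ]
    (A : Set X) (hA : AnalyticSet A) : NullMeasurableSet A μ := by
  rw [AnalyticSet] at hA
  rcases hA with rfl | ⟨F, hF, rfl⟩
  · exact MeasurableSet.empty.nullMeasurableSet
  rcases eq_or_ne (μ (range F)) 0 with h0 | h0
  · exact NullMeasurableSet.of_null h0
  obtain ⟨u, -, hu, hlim⟩ := exists_seq_strictMono_tendsto' (pos_iff_ne_zero.2 h0)
  choose n hn using fun k => exists_core F μ (u k) (hu k).2
  have hm : MeasurableSet (⋃ k, core F (n k)) := MeasurableSet.iUnion fun k => measurableSet_core F _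
  have hs : (⋃ k, core F (n k)) ⊆ range F := iUnion_subset fun k => core_subset F hF _
  have hle : μ (range F) ≤ μ (⋃ k, core F (n k)) :=
    le_of_tendsto' hlim fun k => (hn k).le.trans (measure_mono (subset_iUnion (fun k => core F (n k)) k))
  refine hm.nullMeasurableSet.congr ?_
  exact ae_eq_of_subset_of_measure_ge hs hle hm.nullMeasurableSet (measure_ne_top _ _)

theorem analytic_kernel {E Y : Type*}
    [TopologicalSpace E] [PolishSpace E] [MeasurableSpace E] [BorelSpace E]
    [TopologicalSpace Y] [PolishSpace Y] [MeasurableSpace Y] [BorelSpace Y]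
    (Q : Kernel E Y) [IsFiniteKernel Q] (A : Set (E × Y)) (hA : AnalyticSet A) (r : ENNReal) :
    AnalyticSet {e | r < Q e (Prod.mk e ⁻¹' A)} := by
  rw [AnalyticSet] at hA
  rcases hA with rfl | ⟨F, hF, rfl⟩
  · simp [analyticSet_empty]
  have hD : MeasurableSet {p : (E × (ℕ → ℕ)) × Y | (p.1.1, p.2) ∈ core F p.1.2} := by
    have : {p : (E × (ℕ → ℕ)) × Y | (p.1.1, p.2) ∈ core F p.1.2} =
        ⋂ k : ℕ, ⋃ s : Fin k → ℕ, {p : (E × (ℕ → ℕ)) × Y | (fun i : Fin k => p.1.2 i) = s} ∩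
          {p | (p.1.1, p.2) ∈ hull F k s} := by
      ext p
      simp [core]
    rw [this]
    refine MeasurableSet.iInter fun k => MeasurableSet.iUnion fun s => MeasurableSet.inter ?_ ?_
    · have : Measurable fun p : (E × (ℕ → ℕ)) × Y => (fun i : Fin k => p.1.2 i) := by fun_prop
      exact this (measurableSet_singleton s)
    · have : Measurable fun p : (E × (ℕ → ℕ)) × Y => (p.1.1, p.2) := by fun_prop
      exact this isClosed_closure.measurableSet
  have hm := Kernel.measurable_kernel_prodMk_left (κ := Q.comap (Prod.fst : E × (ℕ → ℕ) → E)
    measurable_fst) hD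
  have hB : MeasurableSet {p : E × (ℕ → ℕ) | r < Q p.1 (Prod.mk p.1 ⁻¹' core F p.2)} :=
    hm measurableSet_Ioi
  have heq : {e | r < Q e (Prod.mk e ⁻¹' range F)} =
      Prod.fst '' {p : E × (ℕ → ℕ) | r < Q p.1 (Prod.mk p.1 ⁻¹' core F p.2)} := by
    ext e
    constructor
    · intro he
      have hemb : MeasurableEmbedding (Prod.mk e : Y → E × Y) := measurableEmbedding_prodMk_left e
      have : r < (Q e).map (Prod.mk e) (range F) := by rwa [hemb.map_apply]
      obtain ⟨n, hn⟩ := exists_core F _ r this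
      rw [hemb.map_apply] at hn
      exact ⟨(e, n), hn, rfl⟩
    · rintro ⟨⟨e, n⟩, hn, rfl⟩
      exact lt_of_lt_of_le hn (measure_mono (preimage_mono (core_subset F hF n)))
  rw [heq]
  exact hB.analyticSet.image_of_continuous continuous_fst

end LSA

/-- Let `E₁`, `E₂` be Polish spaces, `Q` a Borel measurable
Markov kernel from `E₁` to `E₂`, and `g : E₁ × E₂ → [0,∞)` a bounded lower
semi-analytic function.  Then `f e₁ = ∫ g (e₁, e₂) Q(de₂|e₁)` is lower
semi-analytic on `E₁`. -/
theorem lower_semianalytic_integral_kernel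
    {E₁ E₂ : Type*}
    [TopologicalSpace E₁] [PolishSpace E₁] [MeasurableSpace E₁] [BorelSpace E₁]
    [TopologicalSpace E₂] [PolishSpace E₂] [MeasurableSpace E₂] [BorelSpace E₂]
    (Q : Kernel E₁ E₂) [IsMarkovKernel Q]
    (g : E₁ × E₂ → ℝ)
    (hg_nonneg : ∀ p, 0 ≤ g p)
    (hg_bdd : ∃ C : ℝ, ∀ p, g p ≤ C)
    (hg_lsa : ∀ c : ℝ, MeasureTheory.AnalyticSet {p : E₁ × E₂ | g p < c})
    (f : E₁ → ℝ)
    (hf : ∀ e₁, f e₁ = ∫ e₂, g (e₁, e₂) ∂(Q e₁)) :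
    ∀ c : ℝ, MeasureTheory.AnalyticSet {e₁ : E₁ | f e₁ < c} := by
  intro c
  obtain ⟨C, hC⟩ := hg_bdd
  have hsec : ∀ e, AEMeasurable (fun y => g (e, y)) (Q e) := by
    intro e
    refine NullMeasurable.aemeasurable ?_
    refine @measurable_of_Iio ℝ (NullMeasurableSpace E₂ (Q e)) _ _ _ _ _ _ _ _ ?_
    intro t
    exact LSA.nullMeasurable (Q e) _
      ((hg_lsa t).preimage (f := fun y : E₂ => (e, y)) (by fun_prop))
  have hint : ∀ e, Integrable (fun y => g (e, y)) (Q e) := by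
    intro e
    refine Integrable.of_bound (hsec e).aestronglyMeasurable C (Filter.Eventually.of_forall ?_)
    intro y
    rw [Real.norm_of_nonneg (hg_nonneg _)]
    exact hC _
  have hCf : ∀ e, C - f e = ∫ y, (C - g (e, y)) ∂(Q e) := by
    intro e
    rw [integral_sub (integrable_const _) (hint e), hf e]
    simp
  have hCf2 : ∀ e, C - f e = (∫⁻ y, ENNReal.ofReal (C - g (e, y)) ∂(Q e)).toReal := by
    intro e
    rw [hCf e, integral_eq_lintegral_of_nonneg_ae
      (Filter.Eventually.of_forall fun y => sub_nonneg.2 (hC _))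
      ((aemeasurable_const.sub (hsec e)).aestronglyMeasurable)]
  rcases lt_or_ge C c with hcC | hcC
  · have : {e₁ : E₁ | f e₁ < c} = Set.univ := by
      refine Set.eq_univ_of_forall fun e => ?_
      have h := hCf2 e
      have h2 : 0 ≤ (∫⁻ y, ENNReal.ofReal (C - g (e, y)) ∂(Q e)).toReal := ENNReal.toReal_nonneg
      show f e < c
      linarith
    rw [this]
    exact isClosed_univ.analyticSet
  let R : Kernel E₁ (E₂ × ℝ) :=
    Q ×ₖ Kernel.const E₁ ((volume : Measure ℝ).restrict (Set.Ioo 0 C))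
  let A : Set (E₁ × (E₂ × ℝ)) := {p | g (p.1, p.2.1) < p.2.2 ∧ p.2.2 < C}
  have hA : AnalyticSet A := by
    have : A = ⋃ q : ℚ, ⋂ b : Bool, cond b {p : E₁ × (E₂ × ℝ) | g (p.1, p.2.1) < q}
        {p | (q : ℝ) < p.2.2 ∧ p.2.2 < C} := by
      ext p
      simp only [A, Set.mem_iUnion, Set.mem_iInter, Bool.forall_bool, cond_true, cond_false,
        Set.mem_ofPred_eq]
      constructor
      · rintro ⟨h1, h2⟩
        obtain ⟨q, h3, h4⟩ := exists_rat_btwn h1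
        exact ⟨q, ⟨h4, h2⟩, h3⟩
      · rintro ⟨q, ⟨h4, h2⟩, h3⟩
        exact ⟨h3.trans h4, h2⟩
    rw [this]
    refine AnalyticSet.iUnion fun q => AnalyticSet.iInter fun b => ?_
    cases b
    · refine MeasurableSet.analyticSet ?_
      have hm : Measurable fun p : E₁ × (E₂ × ℝ) => p.2.2 := by fun_prop
      exact (measurableSet_lt measurable_const hm).inter (measurableSet_lt hm measurable_const)
    · exact (hg_lsa q).preimage (f := fun p : E₁ × (E₂ × ℝ) => (p.1, p.2.1)) (by fun_prop)
  have hL : ∀ e, R e (Prod.mk e ⁻¹' A) = ∫⁻ y, ENNReal.ofReal (C - g (e, y)) ∂(Q e) := by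
    intro e
    have h1 : Prod.mk e ⁻¹' A = regionBetween (fun y => g (e, y)) (fun _ => C) Set.univ := by
      ext p
      simp [A, regionBetween]
    have h2 := volume_regionBetween_eq_lintegral (μ := Q e) (s := Set.univ)
      (f := fun y => g (e, y)) (g := fun _ => C) (by simpa using hsec e) aemeasurable_const
      MeasurableSet.univ
    rw [Measure.restrict_univ] at h2
    have h3 : R e = ((Q e).prod volume).restrict (Set.univ ×ˢ Set.Ioo 0 C) := by
      rw [← Measure.prod_restrict, Measure.restrict_univ]
      simp [R, Kernel.prod_apply]
    rw [h3, Measure.restrict_apply' (MeasurableSet.univ.prod measurableSet_Ioo), h1,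
      Set.inter_eq_left.2]
    · exact h2
    · rintro p ⟨-, hp1, hp2⟩
      exact ⟨trivial, lt_of_le_of_lt (hg_nonneg _) hp1, hp2⟩
  have hfin : {e₁ : E₁ | f e₁ < c} = {e | ENNReal.ofReal (C - c) < R e (Prod.mk e ⁻¹' A)} := by
    ext e
    rw [Set.mem_ofPred_eq, Set.mem_ofPred_eq,
      ENNReal.ofReal_lt_iff_lt_toReal (sub_nonneg.2 hcC) (measure_ne_top _ _), hL, ← hCf2]
    constructor <;> intro h <;> linarith
  rw [hfin]
  exact LSA.analytic_kernel R A hA _
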